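/- arXiv:0907.1809 — 2 statements merged into one kernel-verified Lean document; each statement's English description precedes it below -/
import Mathlib

section
/- Let (m_1, …, m_k) be an admissible distance sequence with k = 2s even, let χ : Q(m) → ℤ be the linear functional with χ(q_i) = m_i for all i, and let K = Ker χ equipped with the restriction of the bilinear form of Q(m). Then the quotient of K by its radical is isometric to the orthogonal complement, inside the standard Euclidean lattice ℤ^{2s−1}, of the vector f = 3e_1 + … + 3e_s + e_{s+1} + … + e_{2s−1}. -/
/-- Admissible distance sequences: the sequences of vertex distances between
consecutive leaves of marked admissible trees with `2 k` vertices. -/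
inductive AdmSeq : List ℤ → Prop
  | base : AdmSeq [2]
  | left (a : ℤ) (l : List ℤ) : AdmSeq (a :: l) → AdmSeq (3 :: (a + 1) :: l)
  | right (l : List ℤ) (a : ℤ) : AdmSeq (l ++ [a]) → AdmSeq (l ++ [a + 1, 3])
  | mid (l₁ : List ℤ) (a b : ℤ) (l₂ : List ℤ) :
      AdmSeq (l₁ ++ a :: b :: l₂) → AdmSeq (l₁ ++ (a + 1) :: 3 :: (b + 1) :: l₂)

/-- The bilinear form of the lattice `Q(m)`: `qᵢ·qᵢ = mᵢ - 2`, `qᵢ·qᵢ₊₁ = 1`,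
and `qᵢ·qⱼ = 0` for `|i - j| ≥ 2`. -/
def QForm (m : List ℤ) (x y : Fin m.length → ℤ) : ℤ :=
  ∑ i, ∑ j,
    (if i = j then m.get i - 2
      else if (i : ℕ) + 1 = (j : ℕ) ∨ (j : ℕ) + 1 = (i : ℕ) then 1 else 0) * x i * y j

/-- The characteristic functional `χ(x) = ∑ mᵢ xᵢ` of `Q(m)`. -/
def chiHom (m : List ℤ) : (Fin m.length → ℤ) →+ ℤ :=
  AddMonoidHom.mk' (fun x => ∑ i, m.get i * x i)
    (by intro a b; simp [mul_add, Finset.sum_add_distrib])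

/-- `K = Ker χ ⊆ Q(m)`. -/
def kerChi (m : List ℤ) : AddSubgroup (Fin m.length → ℤ) := (chiHom m).ker

/-- The functional `z ↦ 3(z_1 + … + z_s) + z_{s+1} + … + z_{2s-1}` on `ℤ^{2s-1}`,
i.e. the product with `f = 3e_1 + … + 3e_s + e_{s+1} + … + e_{2s-1}`. -/
def fHom (s : ℕ) : (Fin (2 * s - 1) → ℤ) →+ ℤ :=
  AddMonoidHom.mk' (fun z => ∑ i : Fin (2 * s - 1), (if (i : ℕ) < s then 3 else 1) * z i)
    (by intro a b; simp [mul_add, Finset.sum_add_distrib])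

/-- The orthogonal complement of `f` inside the standard Euclidean lattice `ℤ^{2s-1}`. -/
def fPerp (s : ℕ) : AddSubgroup (Fin (2 * s - 1) → ℤ) := (fHom s).ker

/-!
A marked admissible tree is dual to a triangulated `(k + 1)`-gon, one growth step of the distance
sequence being the gluing of a triangle. Take the triangles as an orthonormal basis. With suitable
signs the vertex–triangle incidence vectors of the polygon are orthogonal unless the vertices are
adjacent, the norm of the `i`-th vertex is `m_i - 2`, and adjacent vertices have product `-1`,
except for `+1` on the closing edge. For even `k` the polygon is odd, and alternating the signs of
the vertices turns all these products into `1`; the first `k` vertices then map `Q(m)` onto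
`ℤ^{k-1}`. The sum `c` of all `k + 1` alternating vectors pairs with each of them to its norm plus
`2`, so it represents `χ`. Each triangle has three vertices, so the entries of `c` are odd and at
most `3` in absolute value, and `c · c` equals `f · f`. Hence a signed permutation takes `c` to
`f`, and `K` is mapped onto the orthogonal complement of `f`, with kernel its radical because the
target is positive definite.
-/

open Finset

namespace AdmSeq

/-- One growth step of a distance sequence, with all insertion positions treated uniformly: the
entry `3` is inserted at the gap `j` (before the `j`-th entry, or at the end if `j = Fin.last k`)
and each entry next to the gap grows by `1`. -/
def gapInsert {k : ℕ} (M : Fin k → ℤ) (j : Fin (k + 1)) : Fin (k + 1) → ℤ :=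
  j.insertNth 3 fun i => M i + if i.castSucc = j ∨ i.succ = j then 1 else 0

theorem getElem_ofFn_gapInsert {k : ℕ} (M : Fin k → ℤ) (j : Fin (k + 1)) (i : ℕ)
    (hi : i < (List.ofFn (gapInsert M j)).length) :
    (List.ofFn (gapInsert M j))[i] =
      if h : i < j then M ⟨i, by omega⟩ + if i + 1 = j then 1 else 0
      else if h' : i = j then 3
      else M ⟨i - 1, by rw [List.length_ofFn] at hi; omega⟩ + if i = j + 1 then 1 else 0 := by
  have hk : i < k + 1 := by simpa using hi
  rw [List.getElem_ofFn]
  rcases lt_trichotomy i (j : ℕ) with h | h | h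
  · have e : (⟨i, hk⟩ : Fin (k + 1)) = j.succAbove ⟨i, by omega⟩ := by
      simp [Fin.succAbove, Fin.lt_def, h]
    simp only [e, gapInsert, Fin.insertNth_apply_succAbove]
    simp only [h, Fin.ext_iff, Fin.val_castSucc, Fin.val_succ, h.ne, false_or, dif_pos]
  · simp [gapInsert, h]
  · have e : (⟨i, hk⟩ : Fin (k + 1)) = j.succAbove ⟨i - 1, by omega⟩ := by
      rw [Fin.succAbove_of_le_castSucc j _ (by rw [Fin.le_def, Fin.val_castSucc]; grind)]
      exact Fin.ext (by rw [Fin.val_succ]; grind)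
    simp only [e, gapInsert, Fin.insertNth_apply_succAbove, dif_neg h.le.not_gt, dif_neg h.ne']
    simp only [Fin.ext_iff, Fin.val_castSucc, Fin.val_succ]
    congr 2
    simp only [eq_iff_iff]
    omega

theorem ofFn_gapInsert_cons (a : ℤ) (l : List ℤ) :
    List.ofFn (gapInsert (a :: l).get 0) = 3 :: (a + 1) :: l := by
  refine List.ext_getElem (by simp) fun i _ _ => ?_
  simp only [getElem_ofFn_gapInsert, List.get_eq_getElem, Fin.val_zero]
  grind

theorem ofFn_gapInsert_concat (l : List ℤ) (a : ℤ) :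
    List.ofFn (gapInsert (l ++ [a]).get (Fin.last _)) = l ++ [a + 1, 3] := by
  refine List.ext_getElem (by simp) fun i _ _ => ?_
  simp only [getElem_ofFn_gapInsert, List.get_eq_getElem, Fin.val_last]
  grind

theorem ofFn_gapInsert_append (l₁ : List ℤ) (a b : ℤ) (l₂ : List ℤ) :
    List.ofFn (gapInsert (l₁ ++ a :: b :: l₂).get ⟨l₁.length + 1, by simp⟩) =
      l₁ ++ (a + 1) :: 3 :: (b + 1) :: l₂ := by
  refine List.ext_getElem (by grind) fun i _ _ => ?_
  simp only [getElem_ofFn_gapInsert, List.get_eq_getElem]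
  grind

theorem induction_gapInsert {motive : ∀ k, (Fin k → ℤ) → Prop} (base : motive 1 ![2])
    (insert : ∀ k (M : Fin k → ℤ) j, motive k M → motive (k + 1) (gapInsert M j))
    {m : List ℤ} (hm : AdmSeq m) : motive m.length m.get := by
  have of_ofFn {k : ℕ} {M : Fin k → ℤ} {l : List ℤ} (hl : List.ofFn M = l) (hM : motive k M) :
      motive l.length l.get := by
    subst hl
    have e : (⟨_, (List.ofFn M).get⟩ : Σ n, Fin n → ℤ) = ⟨k, M⟩ :=
      List.equivSigmaTuple.right_inv ⟨k, M⟩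
    exact (congrArg (fun p : Σ n, Fin n → ℤ => motive p.1 p.2) e).mpr hM
  induction hm with
  | base => exact of_ofFn rfl base
  | left a l _ ih => exact of_ofFn (ofFn_gapInsert_cons a l) (insert _ _ _ ih)
  | right l a _ ih => exact of_ofFn (ofFn_gapInsert_concat l a) (insert _ _ _ ih)
  | mid l₁ a b l₂ _ ih => exact of_ofFn (ofFn_gapInsert_append l₁ a b l₂) (insert _ _ _ ih)

end AdmSeq

/-- Off-diagonal Gram matrix of an `N`-gon with a twist: adjacent vertices have product `-1`,
except that the edge closing the polygon, from the last vertex to the first, counts `+1`. The two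
contributions are added, so that they cancel for `N = 2`. -/
def twistedAdj {N : ℕ} (i j : Fin N) : ℤ :=
  (if (i : ℕ) + 1 = j ∨ (j : ℕ) + 1 = i then -1 else 0) +
    if ((i : ℕ) = 0 ∧ (j : ℕ) + 1 = N) ∨ ((j : ℕ) = 0 ∧ (i : ℕ) + 1 = N) then 1 else 0

section twistedAdj

variable {N : ℕ}

theorem twistedAdj_comm (i j : Fin N) : twistedAdj i j = twistedAdj j i := by
  grind [twistedAdj]

theorem twistedAdj_self (hN : 2 ≤ N) (i : Fin N) : twistedAdj i i = 0 := by
  grind [twistedAdj]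

theorem val_succAbove_eq_ite (j : Fin (N + 1)) (i : Fin N) :
    (j.succAbove i : ℕ) = if (i : ℕ) < j then (i : ℕ) else i + 1 := by
  simp only [Fin.succAbove, Fin.lt_def, Fin.val_castSucc]
  split_ifs <;> simp

theorem twistedAdj_of_lt {i j : Fin N} (h : i < j) :
    twistedAdj i j = (if (i : ℕ) + 1 = j then -1 else 0) +
      if (i : ℕ) = 0 ∧ (j : ℕ) + 1 = N then 1 else 0 := by
  rw [Fin.lt_def] at h
  unfold twistedAdj
  congr 2 <;> simp only [eq_iff_iff] <;> omega

theorem twistedAdj_succAbove_right (j : Fin (N + 1)) (i : Fin N) :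
    twistedAdj j (j.succAbove i) =
      (if (i : ℕ) = j ∨ (i : ℕ) + 1 = j then -1 else 0) +
        if ((j : ℕ) = 0 ∧ (i : ℕ) + 1 = N) ∨ ((i : ℕ) = 0 ∧ (j : ℕ) = N) then 1 else 0 := by
  unfold twistedAdj
  congr 2 <;> simp only [eq_iff_iff, val_succAbove_eq_ite] <;> split_ifs <;> omega

theorem twistedAdj_succAbove_of_lt (j : Fin (N + 1)) {i l : Fin N} (h : i < l) :
    twistedAdj (j.succAbove i) (j.succAbove l) =
      twistedAdj j (j.succAbove i) * twistedAdj j (j.succAbove l) + twistedAdj i l := by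
  rw [twistedAdj_succAbove_right, twistedAdj_succAbove_right, twistedAdj_of_lt h,
    twistedAdj_of_lt (Fin.succAbove_lt_succAbove_iff.mpr h), val_succAbove_eq_ite,
    val_succAbove_eq_ite]
  rw [Fin.lt_def] at h
  rcases lt_or_ge (i : ℕ) j with hi | hi <;> rcases lt_or_ge (l : ℕ) j with hl | hl <;>
    simp only [hi, hl, hi.not_gt, hl.not_gt, if_true, if_false] <;>
    split_ifs <;> first | omega | simp_all

-- The two neighbours of the inserted vertex are no longer adjacent: the product cancels their
-- former entry.
theorem twistedAdj_succAbove (j : Fin (N + 1)) {i l : Fin N} (h : i ≠ l) :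
    twistedAdj (j.succAbove i) (j.succAbove l) =
      twistedAdj j (j.succAbove i) * twistedAdj j (j.succAbove l) + twistedAdj i l := by
  rcases h.lt_or_gt with h | h
  · exact twistedAdj_succAbove_of_lt j h
  · rw [twistedAdj_comm, twistedAdj_succAbove_of_lt j h, mul_comm, twistedAdj_comm l]

theorem twistedAdj_castSucc_sq (j : Fin (N + 1)) (i : Fin N) :
    twistedAdj j.castSucc (j.succAbove i).castSucc ^ 2 =
      if i.castSucc = j ∨ i.succ = j then 1 else 0 := by
  rw [← Fin.castSucc_succAbove_castSucc, twistedAdj_succAbove_right]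
  simp only [Fin.ext_iff, Fin.val_castSucc, Fin.val_succ]
  split_ifs <;> omega

theorem sum_twistedAdj_sq (hN : 3 ≤ N) (i : Fin N) : ∑ j, twistedAdj i j ^ 2 = 2 := by
  obtain ⟨next, hnext⟩ : ∃ a : Fin N, if (i : ℕ) + 1 = N then (a : ℕ) = 0 else (a : ℕ) = i + 1 := by
    split_ifs
    exacts [⟨⟨0, by omega⟩, rfl⟩, ⟨⟨i + 1, by omega⟩, rfl⟩]
  obtain ⟨prev, hprev⟩ : ∃ a : Fin N, if (i : ℕ) = 0 then (a : ℕ) + 1 = N else (a : ℕ) + 1 = i := by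
    split_ifs
    exacts [⟨⟨N - 1, by omega⟩, by grind⟩, ⟨⟨i - 1, by omega⟩, by grind⟩]
  have sq_eq (j : Fin N) :
      twistedAdj i j ^ 2 = (if j = next then 1 else 0) + if j = prev then 1 else 0 := by
    simp only [twistedAdj, Fin.ext_iff]
    grind
  simp [sq_eq, sum_add_distrib]

theorem neg_one_pow_mul_twistedAdj (hN : Odd N) (i j : Fin N) :
    (-1) ^ (i : ℕ) * (-1) ^ (j : ℕ) * twistedAdj i j = twistedAdj i j ^ 2 := by
  rw [← pow_add]
  unfold twistedAdj
  split_ifs with hadj hwrap hwrap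
  · grind
  · have hodd : Odd ((i : ℕ) + j) := by grind
    simp [hodd.neg_one_pow]
  · have heven : Even ((i : ℕ) + j) := by grind
    simp [heven.neg_one_pow]
  · simp

end twistedAdj

/-- The vectors `V` are the signed vertex–triangle incidence vectors of a triangulated
`(k + 1)`-gon: `V i t = ±1` if the vertex `i` lies on the triangle `t`, and `V i t = 0` otherwise.
Each of the first `k` vertices `i` lies on `M i - 2` triangles, and these vertices span the lattice;
the last vertex carries no label. The signs are such that the two triangles on a diagonal cancel in
the product of its endpoints. -/
structure IsSignedTriangulation {k n : ℕ} (M : Fin k → ℤ) (V : Fin (k + 1) → Fin n → ℤ) :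
    Prop where
  card_eq : k = n + 1
  dotProduct_self : ∀ i : Fin k, V i.castSucc ⬝ᵥ V i.castSucc = M i - 2
  dotProduct_of_ne : ∀ i j, i ≠ j → V i ⬝ᵥ V j = twistedAdj i j
  sum_sq : ∀ t, ∑ i, V i t ^ 2 = 3
  surjective : Function.Surjective (Fintype.linearCombination ℤ fun i : Fin k => V i.castSucc)

/-- The incidence vectors after gluing a new triangle, which becomes the coordinate `0`, onto the
edge of the polygon just before the vertex `j`; its new vertex gets the index `j`. -/
def glueTriangle {N n : ℕ} (V : Fin N → Fin n → ℤ) (j : Fin (N + 1)) :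
    Fin (N + 1) → Fin (n + 1) → ℤ :=
  j.insertNth (Matrix.vecCons 1 0) fun i => Matrix.vecCons (twistedAdj j (j.succAbove i)) (V i)

section glueTriangle

variable {N n : ℕ} (V : Fin N → Fin n → ℤ) (j : Fin (N + 1))

@[simp]
theorem glueTriangle_same : glueTriangle V j j = Matrix.vecCons 1 0 := by
  simp [glueTriangle]

@[simp]
theorem glueTriangle_succAbove (i : Fin N) :
    glueTriangle V j (j.succAbove i) = Matrix.vecCons (twistedAdj j (j.succAbove i)) (V i) := by
  simp [glueTriangle]

theorem glueTriangle_dotProduct_of_ne (hV : ∀ i l, i ≠ l → V i ⬝ᵥ V l = twistedAdj i l)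
    (a b : Fin (N + 1)) (h : a ≠ b) :
    glueTriangle V j a ⬝ᵥ glueTriangle V j b = twistedAdj a b := by
  rcases Fin.eq_self_or_eq_succAbove j a with rfl | ⟨i, rfl⟩
  · obtain ⟨l, rfl⟩ := Fin.exists_succAbove_eq h.symm
    simp
  · rcases Fin.eq_self_or_eq_succAbove j b with rfl | ⟨l, rfl⟩
    · simp [twistedAdj_comm]
    · have hil : i ≠ l := fun e => h (e ▸ rfl)
      simp [hV i l hil, twistedAdj_succAbove j hil]

theorem glueTriangle_sum_sq (hN : 2 ≤ N) (hV : ∀ t, ∑ i, V i t ^ 2 = 3) (t : Fin (n + 1)) :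
    ∑ i, glueTriangle V j i t ^ 2 = 3 := by
  rw [Fin.sum_univ_succAbove _ j]
  induction t using Fin.cases with
  | zero =>
    have h := sum_twistedAdj_sq (by omega) j
    rw [Fin.sum_univ_succAbove _ j, twistedAdj_self (by omega)] at h
    simp only [glueTriangle_same, glueTriangle_succAbove, Matrix.cons_val_zero]
    linarith
  | succ t => simpa using hV t

theorem glueTriangle_surjective {k : ℕ} (V : Fin (k + 1) → Fin n → ℤ) (j : Fin (k + 1))
    (hV : Function.Surjective (Fintype.linearCombination ℤ fun i : Fin k => V i.castSucc)) :
    Function.Surjective (Fintype.linearCombination ℤ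
      fun i : Fin (k + 1) => glueTriangle V j.castSucc i.castSucc) := by
  intro z
  obtain ⟨x, hx⟩ := hV (Matrix.vecTail z)
  refine ⟨j.insertNth (α := fun _ => ℤ)
    (z 0 - ∑ i, x i * twistedAdj j.castSucc (j.succAbove i).castSucc) x, ?_⟩
  rw [Fintype.linearCombination_apply] at hx ⊢
  rw [Fin.sum_univ_succAbove _ j]
  simp only [Fin.insertNth_apply_same, Fin.insertNth_apply_succAbove, glueTriangle_same,
    ← Fin.castSucc_succAbove_castSucc, glueTriangle_succAbove]
  ext t
  induction t using Fin.cases with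
  | zero => simp
  | succ t => simpa [Matrix.vecTail] using congrFun hx t

end glueTriangle

namespace IsSignedTriangulation

variable {k n : ℕ} {M : Fin k → ℤ} {V : Fin (k + 1) → Fin n → ℤ}

theorem digon : IsSignedTriangulation ![2] (0 : Fin 2 → Fin 0 → ℤ) where
  card_eq := rfl
  dotProduct_self i := by fin_cases i; simp
  dotProduct_of_ne i j h := by fin_cases i <;> fin_cases j <;> simp [twistedAdj] at h ⊢
  sum_sq t := t.elim0
  surjective z := ⟨0, Subsingleton.elim _ _⟩

theorem glue (H : IsSignedTriangulation M V) (j : Fin (k + 1)) :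
    IsSignedTriangulation (AdmSeq.gapInsert M j) (glueTriangle V j.castSucc) where
  card_eq := by rw [H.card_eq]
  dotProduct_self i := by
    rcases Fin.eq_self_or_eq_succAbove j i with rfl | ⟨i, rfl⟩
    · simp [AdmSeq.gapInsert]
    · rw [← Fin.castSucc_succAbove_castSucc, glueTriangle_succAbove, Matrix.cons_dotProduct_cons,
        H.dotProduct_self, Fin.castSucc_succAbove_castSucc, ← sq, twistedAdj_castSucc_sq,
        AdmSeq.gapInsert, Fin.insertNth_apply_succAbove]
      ring
  dotProduct_of_ne := glueTriangle_dotProduct_of_ne V _ H.dotProduct_of_ne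
  sum_sq := glueTriangle_sum_sq V _ (by have := H.card_eq; omega) H.sum_sq
  surjective := glueTriangle_surjective V j H.surjective

end IsSignedTriangulation

theorem AdmSeq.exists_isSignedTriangulation {m : List ℤ} (hm : AdmSeq m) :
    ∃ (n : ℕ) (V : Fin (m.length + 1) → Fin n → ℤ), IsSignedTriangulation m.get V :=
  hm.induction_gapInsert (motive := fun k M =>
      ∃ (n : ℕ) (V : Fin (k + 1) → Fin n → ℤ), IsSignedTriangulation M V)
    ⟨0, 0, IsSignedTriangulation.digon⟩ fun _ _ j ⟨_, _, H⟩ => ⟨_, _, H.glue j⟩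

/-- The vectors with alternating signs. When their number is odd this removes the twist: for the
incidence vectors of a signed triangulation, all adjacent vertices, also across the closing edge,
then have product `1`. -/
def alternate {N n : ℕ} (V : Fin N → Fin n → ℤ) (i : Fin N) : Fin n → ℤ :=
  (-1 : ℤ) ^ (i : ℕ) • V i

/-- The sum of all alternating incidence vectors, which represents `χ`: its product with each
alternating vector is the norm of that vector plus `2`. -/
def characteristicVector {N n : ℕ} (V : Fin N → Fin n → ℤ) : Fin n → ℤ :=
  ∑ i, alternate V i

/-- The lattice map sending the generator `q i` to the `i`-th alternating incidence vector. -/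
def latticeMap {k n : ℕ} (V : Fin (k + 1) → Fin n → ℤ) : (Fin k → ℤ) →ₗ[ℤ] Fin n → ℤ :=
  Fintype.linearCombination ℤ fun i : Fin k => alternate V i.castSucc

section alternate

variable {N n : ℕ} (V : Fin N → Fin n → ℤ)

theorem alternate_dotProduct (i j : Fin N) :
    alternate V i ⬝ᵥ alternate V j = (-1) ^ (i : ℕ) * (-1) ^ (j : ℕ) * (V i ⬝ᵥ V j) := by
  rw [alternate, alternate, smul_dotProduct, dotProduct_smul, smul_eq_mul, smul_eq_mul, mul_assoc]

theorem alternate_dotProduct_self (i : Fin N) : alternate V i ⬝ᵥ alternate V i = V i ⬝ᵥ V i := by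
  rw [alternate_dotProduct, ← mul_pow]
  simp

theorem even_characteristicVector_sub_sum_sq (t : Fin n) :
    Even (characteristicVector V t - ∑ i, V i t ^ 2) := by
  simp only [characteristicVector, alternate, Finset.sum_apply, Pi.smul_apply, smul_eq_mul,
    ← sum_sub_distrib]
  refine even_sum _ fun i _ => ?_
  rcases neg_one_pow_eq_or ℤ (i : ℕ) with h | h <;> rw [h] <;> simp [Int.even_sub, parity_simps]

theorem abs_characteristicVector_le (t : Fin n) :
    |characteristicVector V t| ≤ ∑ i, V i t ^ 2 := by
  simp only [characteristicVector, alternate, Finset.sum_apply, Pi.smul_apply, smul_eq_mul]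
  refine (abs_sum_le_sum_abs _ _).trans (sum_le_sum fun i _ => ?_)
  rw [abs_mul, abs_neg_one_pow, one_mul, ← Int.natCast_natAbs, ← Int.natAbs_sq]
  exact_mod_cast Nat.le_self_pow two_ne_zero _

end alternate

namespace IsSignedTriangulation

variable {k n : ℕ} {M : Fin k → ℤ} {V : Fin (k + 1) → Fin n → ℤ}

theorem alternate_dotProduct_of_ne (H : IsSignedTriangulation M V) (hk : Even k)
    {i j : Fin (k + 1)} (h : i ≠ j) : alternate V i ⬝ᵥ alternate V j = twistedAdj i j ^ 2 := by
  rw [alternate_dotProduct, H.dotProduct_of_ne i j h, neg_one_pow_mul_twistedAdj hk.add_one]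

theorem alternate_castSucc_dotProduct (H : IsSignedTriangulation M V) (hk : Even k)
    (i j : Fin k) : alternate V i.castSucc ⬝ᵥ alternate V j.castSucc =
      if i = j then M i - 2 else if (i : ℕ) + 1 = j ∨ (j : ℕ) + 1 = i then 1 else 0 := by
  split_ifs with h hadj
  · rw [← h, alternate_dotProduct_self, H.dotProduct_self]
  all_goals
    rw [H.alternate_dotProduct_of_ne hk (by simpa using h)]
    simp [twistedAdj, hadj, i.isLt.ne, j.isLt.ne]

theorem characteristicVector_dotProduct_alternate (H : IsSignedTriangulation M V) (hk : Even k)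
    (i : Fin (k + 1)) : characteristicVector V ⬝ᵥ alternate V i = V i ⬝ᵥ V i + 2 := by
  have hk2 : 2 ≤ k := by
    have := H.card_eq
    grind
  have h (j : Fin (k + 1)) : alternate V j ⬝ᵥ alternate V i =
      (if j = i then V i ⬝ᵥ V i else 0) + twistedAdj i j ^ 2 := by
    split_ifs with hji
    · rw [hji, alternate_dotProduct_self, twistedAdj_self (by omega)]
      ring
    · rw [H.alternate_dotProduct_of_ne hk hji, twistedAdj_comm, zero_add]
  simp only [characteristicVector, sum_dotProduct, h, sum_add_distrib,
    sum_twistedAdj_sq (show 3 ≤ k + 1 by omega), sum_ite_eq', mem_univ, if_true]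

theorem characteristicVector_dotProduct_self (H : IsSignedTriangulation M V) (hk : Even k) :
    characteristicVector V ⬝ᵥ characteristicVector V = 5 * n + 4 := by
  have sum_norm : ∑ i, V i ⬝ᵥ V i = 3 * n := by
    simp only [dotProduct, ← sq]
    rw [sum_comm]
    simp [H.sum_sq, mul_comm]
  calc characteristicVector V ⬝ᵥ characteristicVector V
      = ∑ i, (V i ⬝ᵥ V i + 2) := by
        conv_lhs => rw [characteristicVector.eq_def V, dotProduct_sum]
        exact sum_congr rfl fun i _ => H.characteristicVector_dotProduct_alternate hk i
    _ = 5 * n + 4 := by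
        rw [sum_add_distrib, sum_norm]
        simp only [sum_const, card_univ, Fintype.card_fin, H.card_eq, Int.nsmul_eq_mul,
          Nat.cast_add, Nat.cast_one]
        ring

theorem characteristicVector_sq_eq (H : IsSignedTriangulation M V) (t : Fin n) :
    characteristicVector V t ^ 2 = 9 ∨ characteristicVector V t ^ 2 = 1 := by
  have hle := abs_characteristicVector_le V t
  have hodd := even_characteristicVector_sub_sum_sq V t
  rw [H.sum_sq] at hle hodd
  obtain ⟨h₁, h₂⟩ := abs_le.mp hle
  generalize characteristicVector V t = c at *
  interval_cases c <;> first | decide | exact absurd hodd (by decide)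

theorem latticeMap_surjective (H : IsSignedTriangulation M V) :
    Function.Surjective (latticeMap V) := by
  intro z
  obtain ⟨x, hx⟩ := H.surjective z
  refine ⟨fun i => (-1) ^ (i : ℕ) * x i, ?_⟩
  rw [← hx, latticeMap, Fintype.linearCombination_apply, Fintype.linearCombination_apply]
  refine sum_congr rfl fun i _ => ?_
  rw [alternate, smul_smul, Fin.val_castSucc, mul_right_comm, ← mul_pow]
  simp

theorem characteristicVector_dotProduct_latticeMap (H : IsSignedTriangulation M V) (hk : Even k)
    (x : Fin k → ℤ) : characteristicVector V ⬝ᵥ latticeMap V x = ∑ i, M i * x i := by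
  rw [latticeMap, Fintype.linearCombination_apply, dotProduct_sum]
  refine sum_congr rfl fun i _ => ?_
  rw [dotProduct_smul, H.characteristicVector_dotProduct_alternate hk, H.dotProduct_self]
  simp [mul_comm]

end IsSignedTriangulation

theorem IsSignedTriangulation.latticeMap_dotProduct_latticeMap {m : List ℤ} {n : ℕ}
    {V : Fin (m.length + 1) → Fin n → ℤ} (H : IsSignedTriangulation m.get V)
    (hm : Even m.length) (x y : Fin m.length → ℤ) :
    latticeMap V x ⬝ᵥ latticeMap V y = QForm m x y := by
  rw [latticeMap, Fintype.linearCombination_apply, Fintype.linearCombination_apply,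
    sum_dotProduct, QForm]
  refine sum_congr rfl fun i _ => ?_
  rw [dotProduct_sum]
  refine sum_congr rfl fun j _ => ?_
  rw [smul_dotProduct, dotProduct_smul, H.alternate_castSucc_dotProduct hm, smul_eq_mul,
    smul_eq_mul, mul_comm (y j), mul_left_comm, mul_assoc]

section SignedPermutation

variable {ι R : Type*} [Fintype ι] [CommRing R] [NoZeroDivisors R]

theorem exists_perm_comp_eq_of_sum_eq [CharZero R] {a b : R} (hab : a ≠ b) {g h : ι → R}
    (hg : ∀ t, g t = a ∨ g t = b) (hh : ∀ t, h t = a ∨ h t = b) (hsum : ∑ t, g t = ∑ t, h t) :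
    ∃ σ : Equiv.Perm ι, ∀ t, g (σ t) = h t := by
  classical
  have sum_eq {u : ι → R} (hu : ∀ t, u t = a ∨ u t = b) :
      ∑ t, u t = Fintype.card ι * b + Fintype.card {t // u t = a} * (a - b) := by
    have hu' (t : ι) : u t = b + if u t = a then a - b else 0 := by
      rcases hu t with e | e <;> simp [e, hab.symm]
    rw [sum_congr rfl fun t _ => hu' t, sum_add_distrib, ← sum_filter]
    simp [Fintype.card_subtype, mul_sub]
  have hcard : Fintype.card {t // h t = a} = Fintype.card {t // g t = a} := by
    rw [sum_eq hg, sum_eq hh, add_right_inj, mul_left_inj' (sub_ne_zero.mpr hab)] at hsum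
    exact_mod_cast hsum.symm
  let e : {t // h t = a} ≃ {t // g t = a} := Fintype.equivOfCardEq hcard
  refine ⟨e.extendSubtype, fun t => ?_⟩
  by_cases ht : h t = a
  · rw [ht, e.extendSubtype_mem t ht]
  · rw [(hh t).resolve_left ht, (hg _).resolve_left (e.extendSubtype_not_mem t ht)]

theorem exists_isometry_of_perm_sq_eq {c f : ι → R} {σ : Equiv.Perm ι}
    (h : ∀ t, c (σ t) ^ 2 = f t ^ 2) :
    ∃ U : (ι → R) ≃ₗ[R] (ι → R), (∀ y z, U y ⬝ᵥ U z = y ⬝ᵥ z) ∧ U c = f := by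
  have hsign (t : ι) : ∃ ε : Rˣ, ε * ε = 1 ∧ ε • c (σ t) = f t := by
    rcases sq_eq_sq_iff_eq_or_eq_neg.mp (h t) with e | e
    · exact ⟨1, by simp [e]⟩
    · exact ⟨-1, by simp [e]⟩
  choose ε hε hεc using hsign
  refine ⟨(LinearEquiv.funCongrLeft R R σ).trans
    (LinearEquiv.piCongrRight fun t => LinearEquiv.smulOfUnit (ε t)), fun y z => ?_, funext hεc⟩
  refine (sum_congr rfl fun t _ => ?_).trans (Equiv.sum_comp σ fun t => y t * z t)
  change ε t • y (σ t) * ε t • z (σ t) = y (σ t) * z (σ t)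
  rw [smul_mul_smul_comm, hε, one_smul]

theorem exists_isometry_of_sq_two_valued [CharZero R] {a b : R} (hab : a ≠ b) {c f : ι → R}
    (hc : ∀ t, c t ^ 2 = a ∨ c t ^ 2 = b) (hf : ∀ t, f t ^ 2 = a ∨ f t ^ 2 = b)
    (hcf : c ⬝ᵥ c = f ⬝ᵥ f) :
    ∃ U : (ι → R) ≃ₗ[R] (ι → R), (∀ y z, U y ⬝ᵥ U z = y ⬝ᵥ z) ∧ U c = f := by
  simp only [dotProduct, ← sq] at hcf
  obtain ⟨σ, hσ⟩ := exists_perm_comp_eq_of_sum_eq hab hc hf hcf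
  exact exists_isometry_of_perm_sq_eq hσ

end SignedPermutation

/-- The vector `f = 3e₁ + … + 3eₛ + eₛ₊₁ + … + e₂ₛ₋₁`, with coordinates indexed from `0`. -/
def fVec (s : ℕ) (t : Fin (2 * s - 1)) : ℤ :=
  if (t : ℕ) < s then 3 else 1

theorem fHom_apply (s : ℕ) (z : Fin (2 * s - 1) → ℤ) : fHom s z = fVec s ⬝ᵥ z := rfl

theorem fVec_sq_eq (s : ℕ) (t : Fin (2 * s - 1)) : fVec s t ^ 2 = 9 ∨ fVec s t ^ 2 = 1 := by
  unfold fVec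
  split_ifs <;> simp

theorem fVec_dotProduct_self {s : ℕ} (hs : 1 ≤ s) :
    fVec s ⬝ᵥ fVec s = 5 * (2 * s - 1 : ℕ) + 4 := by
  have hsq (t : Fin (2 * s - 1)) : fVec s t * fVec s t = 1 + if (t : ℕ) < s then 8 else 0 := by
    unfold fVec
    split_ifs <;> rfl
  simp only [dotProduct, hsq, sum_add_distrib, sum_ite, sum_const, card_univ, Fintype.card_fin,
    Fin.card_filter_val_lt, smul_zero, add_zero, Int.nsmul_eq_mul, mul_one, Nat.cast_min]
  omega

theorem exists_surjective_ker_of_isometry {A C ι R : Type*} [AddCommGroup A] [AddCommGroup C]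
    [Fintype ι] [CommRing R] [LinearOrder R] [IsStrictOrderedRing R]
    {χ : A →+ C} {ℓ : (ι → R) →+ C} {B : A → A → R} (F : A →+ (ι → R))
    (hF : Function.Surjective F) (hB : ∀ x y, F x ⬝ᵥ F y = B x y) (hχ : ∀ x, ℓ (F x) = χ x) :
    ∃ φ : χ.ker →+ ℓ.ker, Function.Surjective φ ∧
      (∀ x y : χ.ker, (φ x).val ⬝ᵥ (φ y).val = B x y) ∧
      ∀ x : χ.ker, φ x = 0 ↔ ∀ y : χ.ker, B x y = 0 := by
  let φ : χ.ker →+ ℓ.ker := (F.comp χ.ker.subtype).codRestrict _ fun x => (hχ x).trans x.2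
  have hφ (x y : χ.ker) : (φ x).val ⬝ᵥ (φ y).val = B x y := hB x y
  refine ⟨φ, fun z => ?_, hφ, fun x => ⟨fun hx y => ?_, fun hx => ?_⟩⟩
  · obtain ⟨x, hx⟩ := hF z
    exact ⟨⟨x, by rw [AddMonoidHom.mem_ker, ← hχ, hx, z.2]⟩, Subtype.ext hx⟩
  · rw [← hφ, hx, ZeroMemClass.coe_zero, zero_dotProduct]
  · exact Subtype.ext (dotProduct_self_eq_zero.mp ((hφ x x).trans (hx x)))

/-- for an admissible distance sequence `m` of even length `k = 2s`, the
quotient of `K = Ker χ ⊆ Q(m)` by its radical is isometric to the orthogonal complement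
of `f = 3e_1 + … + 3e_s + e_{s+1} + … + e_{2s-1}` in the standard Euclidean `ℤ^{2s-1}`;
equivalently, there is a surjective form-preserving homomorphism `K → f^⊥` whose kernel
is exactly the radical of `K`. -/
theorem kerChi_mod_radical_even (m : List ℤ) (hm : AdmSeq m) (s : ℕ) (hs : 1 ≤ s)
    (hk : m.length = 2 * s) :
    ∃ φ : kerChi m →+ fPerp s,
      Function.Surjective φ ∧
      (∀ x y : kerChi m,
        (∑ t : Fin (2 * s - 1), (φ x).val t * (φ y).val t) = QForm m x.val y.val) ∧
      (∀ x : kerChi m, φ x = 0 ↔ ∀ y : kerChi m, QForm m x.val y.val = 0) := by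
  obtain ⟨n, V, H⟩ := hm.exists_isSignedTriangulation
  obtain rfl : n = 2 * s - 1 := by
    have := H.card_eq
    omega
  have heven : Even m.length := hk ▸ even_two_mul s
  obtain ⟨U, hU, hUf⟩ := exists_isometry_of_sq_two_valued (by norm_num)
    H.characteristicVector_sq_eq (fVec_sq_eq s)
    ((H.characteristicVector_dotProduct_self heven).trans (fVec_dotProduct_self hs).symm)
  let F := U.toLinearMap ∘ₗ latticeMap V
  refine exists_surjective_ker_of_isometry F.toAddMonoidHom
    (U.surjective.comp H.latticeMap_surjective) (fun x y => ?_) fun x => ?_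
  · exact (hU _ _).trans (H.latticeMap_dotProduct_latticeMap heven x y)
  · change fHom s (U _) = _
    rw [fHom_apply, ← hUf, hU]
    exact H.characteristicVector_dotProduct_latticeMap heven x
end

section
/- Let (m_1, …, m_k) be an admissible distance sequence with k = 2s−1 odd (s ≥ 1), let χ : Q(m) → ℤ be the linear functional with χ(q_i) = m_i for all i, and let K = Ker χ equipped with the restriction of the bilinear form of Q(m). Then the quotient of K by its radical is isometric to the lattice D_{2s−2}. -/
/-- The lattice `D_n = {x ∈ ℤ^n : x_1 + … + x_n is even}` (with `D_0 = 0`). -/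
def Dlat (n : ℕ) : AddSubgroup (Fin n → ℤ) where
  carrier := {x | Even (∑ i, x i)}
  zero_mem' := by simp
  add_mem' := by
    intro a b ha hb
    simpa [Finset.sum_add_distrib] using ha.add hb
  neg_mem' := by
    intro a ha
    simpa using ha.neg

/-!
Change the sign of every other generator, so that neighbours pair to `-1`. Inserting a
`3` between `a` and `b` then replaces neighbouring vectors `v`, `w` by `v - e`, `e`, `w - e` with
`e` a new unit vector orthogonal to everything else, as in a toric blow-up. Starting from the zero
vector in `ℤ^0`, this realises `Q(m)` by `k` vectors spanning `ℤ^(k - 1)`. Their single relation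
receives at the new position the sum of the neighbouring coefficients, so its two end coefficients
remain `1`.

Undoing the signs for odd `k` gives a radical vector `r` with end coefficients `1`; pairing it with
`q_1 + ⋯ + q_k` shows `χ(r) = r_1 + r_k = 2`. If `v_i` is the image of `q_i`, then
`m_i = v_i·v_i + 2` has the parity of the coordinate sum of `v_i`. Hence `K = Ker χ` maps into
`D_{k-1}`, and any lift of a vector of `D_{k-1}` has even `χ` and can be moved into `K` by
subtracting a multiple of `r`.
-/

open Matrix

section Tridiagonal

/-- The Gram matrix with diagonal entries `m i - 2` and entries `c` next to the diagonal: `c = 1`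
gives the form of `Q(m)`, and `c = -1` the same form after replacing `q_i` by `(-1) ^ i q_i`. -/
def tridiagonal {k : ℕ} (c : ℤ) (m : Fin k → ℤ) : Matrix (Fin k) (Fin k) ℤ :=
  of fun i j => if i = j then m i - 2 else if (i : ℕ) + 1 = j ∨ (j : ℕ) + 1 = i then c else 0

/-- The diagonal matrix of the sign change `q_i ↦ (-1) ^ i q_i`. -/
def alternatingDiagonal (k : ℕ) : Matrix (Fin k) (Fin k) ℤ :=
  diagonal fun i => (-1) ^ (i : ℕ)

variable {k n : ℕ}

theorem isSymm_tridiagonal (c : ℤ) (m : Fin k → ℤ) : (tridiagonal c m).IsSymm := by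
  ext i j
  simp only [tridiagonal, transpose_apply, of_apply]
  grind

theorem alternatingDiagonal_mul_self (k : ℕ) :
    alternatingDiagonal k * alternatingDiagonal k = 1 := by
  simp [alternatingDiagonal, ← mul_pow]

theorem alternatingDiagonal_conj_tridiagonal (c : ℤ) (m : Fin k → ℤ) :
    alternatingDiagonal k * tridiagonal c m * alternatingDiagonal k = tridiagonal (-c) m := by
  have sign_conj (e : ℕ) (a : ℤ) : (-1) ^ e * a * (-1) ^ e = a := by
    rw [mul_right_comm, ← mul_pow, neg_one_mul, neg_neg, one_pow, one_mul]
  ext i j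
  simp only [alternatingDiagonal, tridiagonal, diagonal_mul, mul_diagonal, of_apply]
  split_ifs with hij hadj
  · rw [hij, sign_conj]
  · rcases hadj with hadj | hadj <;> simp [← hadj, pow_succ, sign_conj]
  · simp

theorem tridiagonal_one_mulVec_one (m : Fin (n + 1) → ℤ) :
    tridiagonal 1 m *ᵥ 1 = m - Pi.single 0 1 - Pi.single (Fin.last n) 1 := by
  ext i
  have entry (j) : tridiagonal 1 m i j = (if i = j then m i - 2 else 0) +
      (if (i : ℕ) + 1 = j then 1 else 0) + (if (j : ℕ) + 1 = i then 1 else 0) := by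
    simp only [tridiagonal, of_apply]
    grind
  have right_neighbours : ∑ j : Fin (n + 1), (if (i : ℕ) + 1 = j then (1 : ℤ) else 0) =
      1 - if i = Fin.last n then 1 else 0 := by
    rw [Fin.sum_univ_eq_sum_range (fun j => if (i : ℕ) + 1 = j then (1 : ℤ) else 0)]
    simp only [Finset.sum_ite_eq, Finset.mem_range]
    grind
  have left_neighbours : ∑ j : Fin (n + 1), (if (j : ℕ) + 1 = i then (1 : ℤ) else 0) =
      1 - if i = 0 then 1 else 0 := by
    cases i using Fin.cases with
    | zero => simp
    | succ i =>
      rw [Fin.sum_univ_eq_sum_range (fun j => if j + 1 = (i.succ : ℕ) then (1 : ℤ) else 0)]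
      simp
  simp only [mulVec, dotProduct, Pi.one_apply, mul_one, entry, Finset.sum_add_distrib,
    left_neighbours, right_neighbours, Finset.sum_ite_eq, Finset.mem_univ, if_true, Pi.sub_apply,
    Pi.single_apply]
  ring

end Tridiagonal

/-- The rows of `V` span `ℤ ^ n` and have Gram matrix `tridiagonal c m`, and `r` is a linear
relation between them. For `c = 1` the map `x ↦ x ᵥ* V` thus presents `Q(m)` modulo its radical
as `ℤ ^ n`, with `r` in the radical. -/
structure IsRealization {k n : ℕ} (c : ℤ) (m : Fin k → ℤ) (V : Matrix (Fin k) (Fin n) ℤ)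
    (r : Fin k → ℤ) : Prop where
  gram : V * Vᵀ = tridiagonal c m
  surjective : Function.Surjective (· ᵥ* V)
  relation : r ᵥ* V = 0

namespace IsRealization

variable {k n : ℕ} {c : ℤ} {m : Fin k → ℤ} {V : Matrix (Fin k) (Fin n) ℤ} {r : Fin k → ℤ}

theorem neg (h : IsRealization c m V r) :
    IsRealization (-c) m (alternatingDiagonal k * V) (r ᵥ* alternatingDiagonal k) where
  gram := by
    rw [transpose_mul, Matrix.mul_assoc, ← Matrix.mul_assoc V, h.gram, ← Matrix.mul_assoc,
      alternatingDiagonal, diagonal_transpose, ← alternatingDiagonal,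
      alternatingDiagonal_conj_tridiagonal]
  surjective d := by
    obtain ⟨x, rfl⟩ := h.surjective d
    refine ⟨x ᵥ* alternatingDiagonal k, ?_⟩
    simp [vecMul_vecMul, ← Matrix.mul_assoc, alternatingDiagonal_mul_self]
  relation := by
    simp [vecMul_vecMul, ← Matrix.mul_assoc, alternatingDiagonal_mul_self, h.relation]

theorem vecMul_dotProduct_vecMul (h : IsRealization c m V r) (x y : Fin k → ℤ) :
    (x ᵥ* V) ⬝ᵥ (y ᵥ* V) = x ⬝ᵥ tridiagonal c m *ᵥ y := by
  rw [← h.gram, ← mulVec_mulVec, mulVec_transpose, dotProduct_mulVec]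

theorem relation_dotProduct {m r : Fin (n + 1) → ℤ} {d : ℕ} {V : Matrix (Fin (n + 1)) (Fin d) ℤ}
    (h : IsRealization 1 m V r) : r ⬝ᵥ m = r 0 + r (Fin.last n) := by
  have pairing : r ⬝ᵥ (m - Pi.single 0 1 - Pi.single (Fin.last n) 1) = 0 := by
    rw [← tridiagonal_one_mulVec_one, ← h.vecMul_dotProduct_vecMul, h.relation, zero_dotProduct]
  simp only [dotProduct_sub, dotProduct_single_one] at pairing
  linarith

theorem even_dotProduct_iff (h : IsRealization c m V r) (x : Fin k → ℤ) :
    Even (x ⬝ᵥ m) ↔ Even (∑ t, (x ᵥ* V) t) := by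
  have weight_eq (i) : m i = V i ⬝ᵥ V i + 2 := by
    have diagonal_entry : V i ⬝ᵥ V i = m i - 2 := by
      simpa [tridiagonal, mul_apply'] using congrFun₂ h.gram i i
    rw [diagonal_entry, sub_add_cancel]
  have even_weight_sub (i) : Even (m i - V i ⬝ᵥ 1) := by
    rw [weight_eq, add_sub_right_comm, ← dotProduct_sub]
    exact (Finset.even_sum _ fun t _ => Int.even_mul_pred_self (V i t)).add even_two
  rw [← Int.even_sub, ← dotProduct_one, ← dotProduct_mulVec, ← dotProduct_sub]
  exact Finset.even_sum _ fun i _ => (even_weight_sub i).mul_left (x i)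

end IsRealization

section BlowUp

variable {k n : ℕ} (p : Fin (k + 1))

/-- The indicator of the one or two indices `j` adjacent to the gap `p`, where gap `p` precedes
index `p` and follows index `p - 1`. -/
def gapAdj (j : Fin k) : ℤ :=
  if j.castSucc = p ∨ j.succ = p then 1 else 0

/-- The step of the definition of admissible sequences: insert a `3` into gap `p` and increase its
neighbours by `1`. -/
def blowUp (m : Fin k → ℤ) : Fin (k + 1) → ℤ :=
  p.insertNth 3 (m + gapAdj p)

/-- Insert a new unit vector `e` into gap `p` of the rows of `V` and subtract `e` from its
neighbours; `e` spans the new coordinate, which is placed first. -/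
def blowUpMatrix (V : Matrix (Fin k) (Fin n) ℤ) : Matrix (Fin (k + 1)) (Fin (n + 1)) ℤ :=
  of (p.insertNth (vecCons 1 0) fun j => vecCons (-gapAdj p j) (V j))

/-- The relation between the rows of `blowUpMatrix p V` induced by a relation `r` between the rows
of `V`. -/
def blowUpRelation (r : Fin k → ℤ) : Fin (k + 1) → ℤ :=
  p.insertNth (r ⬝ᵥ gapAdj p) r

theorem val_succAbove (j : Fin k) :
    (p.succAbove j : ℕ) = if (j : ℕ) < p then (j : ℕ) else j + 1 := by
  grind [Fin.succAbove]

theorem tridiagonal_blowUp_self (c : ℤ) (m : Fin k → ℤ) :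
    tridiagonal c (blowUp p m) p p = 1 := by
  simp [tridiagonal, blowUp]

theorem tridiagonal_blowUp_succAbove (c : ℤ) (m : Fin k → ℤ) (j : Fin k) :
    tridiagonal c (blowUp p m) p (p.succAbove j) = c * gapAdj p j := by
  have := val_succAbove p j
  simp only [tridiagonal, gapAdj, of_apply, Fin.ext_iff, Fin.val_castSucc, Fin.val_succ]
  grind

theorem tridiagonal_blowUp_succAbove_succAbove (m : Fin k → ℤ) (i j : Fin k) :
    tridiagonal (-1) (blowUp p m) (p.succAbove i) (p.succAbove j) =
      gapAdj p i * gapAdj p j + tridiagonal (-1) m i j := by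
  have := val_succAbove p i
  have := val_succAbove p j
  simp only [tridiagonal, gapAdj, blowUp, of_apply, Fin.insertNth_apply_succAbove, Pi.add_apply,
    Fin.ext_iff, Fin.val_castSucc, Fin.val_succ]
  grind

theorem blowUpMatrix_mul_transpose {V : Matrix (Fin k) (Fin n) ℤ} {m : Fin k → ℤ}
    (h : V * Vᵀ = tridiagonal (-1) m) :
    blowUpMatrix p V * (blowUpMatrix p V)ᵀ = tridiagonal (-1) (blowUp p m) := by
  have rows (i j) : V i ⬝ᵥ V j = tridiagonal (-1) m i j := congrFun₂ h i j
  have row_self : blowUpMatrix p V p = vecCons 1 0 := by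
    ext t
    simp [blowUpMatrix]
  have row_succAbove (j) : blowUpMatrix p V (p.succAbove j) = vecCons (-gapAdj p j) (V j) := by
    ext t
    simp [blowUpMatrix]
  ext i j
  change blowUpMatrix p V i ⬝ᵥ blowUpMatrix p V j = _
  cases i using p.succAboveCases <;> cases j using p.succAboveCases
  · simp [row_self, tridiagonal_blowUp_self]
  · simp [row_self, row_succAbove, tridiagonal_blowUp_succAbove]
  · simp [row_self, row_succAbove, (isSymm_tridiagonal _ _).apply p, tridiagonal_blowUp_succAbove]
  · simp [row_succAbove, tridiagonal_blowUp_succAbove_succAbove, rows]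

theorem insertNth_vecMul_blowUpMatrix (a : ℤ) (x : Fin k → ℤ) (V : Matrix (Fin k) (Fin n) ℤ) :
    (p.insertNth a x : Fin (k + 1) → ℤ) ᵥ* blowUpMatrix p V =
      vecCons (a - x ⬝ᵥ gapAdj p) (x ᵥ* V) := by
  ext t
  cases t using Fin.cases <;>
    simp [vecMul, dotProduct, Fin.sum_univ_succAbove _ p, blowUpMatrix, sub_eq_add_neg]

theorem IsRealization.blowUp {m : Fin k → ℤ} {V : Matrix (Fin k) (Fin n) ℤ} {r : Fin k → ℤ}
    (h : IsRealization (-1) m V r) :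
    IsRealization (-1) (blowUp p m) (blowUpMatrix p V) (blowUpRelation p r) where
  gram := blowUpMatrix_mul_transpose p h.gram
  surjective d := by
    obtain ⟨x, hx⟩ : ∃ x, x ᵥ* V = vecTail d := h.surjective (vecTail d)
    refine ⟨p.insertNth (vecHead d + x ⬝ᵥ gapAdj p) x, ?_⟩
    simp [insertNth_vecMul_blowUpMatrix, hx]
  relation := by
    simp [blowUpRelation, insertNth_vecMul_blowUpMatrix, h.relation]

theorem gapAdj_zero : gapAdj (0 : Fin (n + 2)) = Pi.single 0 1 := by
  ext j
  simp [gapAdj, Pi.single_apply]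

theorem gapAdj_last : gapAdj (Fin.last (n + 1)) = Pi.single (Fin.last n) 1 := by
  ext j
  simp [gapAdj, Pi.single_apply, Fin.castSucc_ne_last]

theorem blowUpRelation_zero (p : Fin (n + 2)) (r : Fin (n + 1) → ℤ) :
    blowUpRelation p r 0 = r 0 := by
  cases p using Fin.cases with
  | zero => simp [blowUpRelation, gapAdj_zero]
  | succ p =>
    rw [← Fin.succAbove_ne_zero_zero p.succ_ne_zero, blowUpRelation,
      Fin.insertNth_apply_succAbove]

theorem blowUpRelation_last (p : Fin (n + 2)) (r : Fin (n + 1) → ℤ) :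
    blowUpRelation p r (Fin.last (n + 1)) = r (Fin.last n) := by
  cases p using Fin.lastCases with
  | last => simp [blowUpRelation, gapAdj_last]
  | cast p =>
    rw [← Fin.succAbove_ne_last_last p.castSucc_ne_last, blowUpRelation,
      Fin.insertNth_apply_succAbove]

theorem ofFn_blowUp {p : Fin (k + 1)} {m : Fin k → ℤ} {l₁ l₂ : List ℤ}
    (hm : List.ofFn m = l₁ ++ l₂) (hp : (p : ℕ) = l₁.length) :
    List.ofFn (blowUp p m) =
      l₁.modify (l₁.length - 1) (· + 1) ++ 3 :: l₂.modifyHead (· + 1) := by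
  obtain rfl : k = l₁.length + l₂.length := by simpa using congrArg List.length hm
  have m_apply (j : Fin (l₁.length + l₂.length)) : m j = (l₁ ++ l₂)[j] := by simp [← hm]
  refine List.ext_getElem (by simp; omega) fun i hi hi' => ?_
  rw [List.getElem_ofFn]
  rcases Fin.eq_self_or_eq_succAbove p ⟨i, by simpa using hi⟩ with hip | ⟨j, hj⟩
  · rw [hip, blowUp, Fin.insertNth_apply_same]
    grind
  · have := val_succAbove p j
    simp only [hj, blowUp, gapAdj, Fin.insertNth_apply_succAbove, Pi.add_apply, m_apply,
      Fin.ext_iff, Fin.val_castSucc, Fin.val_succ]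
    grind

end BlowUp

/-- The list `l` is the sequence of a realization in the alternating-sign convention whose relation
has both end coefficients equal to `1`. -/
def Realizable (l : List ℤ) : Prop :=
  ∃ (n : ℕ) (m : Fin (n + 1) → ℤ) (V : Matrix (Fin (n + 1)) (Fin n) ℤ) (r : Fin (n + 1) → ℤ),
    List.ofFn m = l ∧ IsRealization (-1) m V r ∧ r 0 = 1 ∧ r (Fin.last n) = 1

theorem realizable_two : Realizable [2] := by
  refine ⟨0, ![2], 0, 1, by simp, ⟨?_, ?_, ?_⟩, rfl, rfl⟩
  · exact Matrix.ext fun | 0, 0 => by simp [tridiagonal]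
  · exact fun _ => ⟨0, Subsingleton.elim _ _⟩
  · exact Subsingleton.elim _ _

theorem Realizable.blowUp {l₁ l₂ : List ℤ} (h : Realizable (l₁ ++ l₂)) :
    Realizable (l₁.modify (l₁.length - 1) (· + 1) ++ 3 :: l₂.modifyHead (· + 1)) := by
  obtain ⟨n, m, V, r, hm, hV, head, last⟩ := h
  have length_eq : n + 1 = l₁.length + l₂.length := by simpa using congrArg List.length hm
  let p : Fin (n + 2) := ⟨l₁.length, by omega⟩
  exact ⟨n + 1, _, _, _, ofFn_blowUp hm rfl, hV.blowUp p, by rw [blowUpRelation_zero, head],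
    by rw [blowUpRelation_last, last]⟩

theorem AdmSeq.realizable {l : List ℤ} (hl : AdmSeq l) : Realizable l := by
  induction hl with
  | base => exact realizable_two
  | left a l _ ih => exact ih.blowUp (l₁ := [])
  | right l a _ ih =>
    rw [← List.append_nil (l ++ [a])] at ih
    simpa [List.modify_eq_take_drop] using ih.blowUp
  | mid l₁ a b l₂ _ ih =>
    rw [List.append_cons] at ih
    simpa [List.modify_eq_take_drop] using ih.blowUp

theorem Realizable.exists_isRealization_one {l : List ℤ} (h : Realizable l) {n : ℕ} (hn : Even n)
    (hlen : l.length = n + 1) :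
    ∃ (V : Matrix (Fin l.length) (Fin n) ℤ) (r : Fin l.length → ℤ),
      IsRealization 1 l.get V r ∧ r ⬝ᵥ l.get = 2 := by
  obtain ⟨n', m, V, r, rfl, hV, head, last⟩ := h
  obtain rfl : n' = n := by simpa using hlen
  have relation_dotProduct : (r ᵥ* alternatingDiagonal (n' + 1)) ⬝ᵥ m = 2 := by
    rw [hV.neg.relation_dotProduct]
    simp [alternatingDiagonal, vecMul_diagonal, head, last, hn.neg_one_pow]
  have get_ofFn : (⟨_, (List.ofFn m).get⟩ : Σ k, Fin k → ℤ) = ⟨n' + 1, m⟩ :=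
    List.equivSigmaTuple.apply_symm_apply ⟨_, m⟩
  let Good (f : Σ k, Fin k → ℤ) : Prop := ∃ (V : Matrix (Fin f.1) (Fin n') ℤ) (r : Fin f.1 → ℤ),
    IsRealization 1 f.2 V r ∧ r ⬝ᵥ f.2 = 2
  suffices Good ⟨_, (List.ofFn m).get⟩ from this
  rw [get_ofFn]
  exact ⟨_, _, hV.neg, relation_dotProduct⟩

theorem chiHom_eq_dotProduct (m : List ℤ) (x : Fin m.length → ℤ) : chiHom m x = x ⬝ᵥ m.get :=
  dotProduct_comm m.get x

theorem QForm_eq_dotProduct_mulVec (m : List ℤ) (x y : Fin m.length → ℤ) :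
    QForm m x y = x ⬝ᵥ tridiagonal 1 m.get *ᵥ y := by
  simp only [QForm, dotProduct, mulVec, tridiagonal, of_apply, Finset.mul_sum]
  exact Finset.sum_congr rfl fun i _ => Finset.sum_congr rfl fun j _ => by ring

namespace IsRealization

variable {m : List ℤ} {n : ℕ} {V : Matrix (Fin m.length) (Fin n) ℤ} {r : Fin m.length → ℤ}

/-- The homomorphism `x ↦ x ᵥ* V` from `K = Ker χ` to `D_n` given by a realization of `Q(m)`. -/
def toDlat (h : IsRealization 1 m.get V r) : kerChi m →+ Dlat n :=
  (V.vecMulLinear.toAddMonoidHom.comp (kerChi m).subtype).codRestrict (Dlat n) fun x =>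
    (h.even_dotProduct_iff x.val).mp <| by
      rw [← chiHom_eq_dotProduct, AddMonoidHom.mem_ker.mp x.2]
      exact Even.zero

theorem toDlat_surjective (h : IsRealization 1 m.get V r) (hr : r ⬝ᵥ m.get = 2) :
    Function.Surjective h.toDlat := by
  rintro ⟨d, hd⟩
  obtain ⟨x, rfl⟩ := h.surjective d
  obtain ⟨c, hc⟩ := (h.even_dotProduct_iff x).mpr hd
  have mem_kerChi : x - c • r ∈ kerChi m := by
    rw [kerChi, AddMonoidHom.mem_ker, chiHom_eq_dotProduct, sub_dotProduct, smul_dotProduct, hr,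
      hc, smul_eq_mul, mul_two, sub_self]
  have image_eq : (x - c • r) ᵥ* V = x ᵥ* V := by
    rw [sub_vecMul, smul_vecMul, h.relation, smul_zero, sub_zero]
  exact ⟨⟨x - c • r, mem_kerChi⟩, Subtype.ext image_eq⟩

theorem toDlat_dotProduct_toDlat (h : IsRealization 1 m.get V r) (x y : kerChi m) :
    (h.toDlat x).val ⬝ᵥ (h.toDlat y).val = QForm m x.val y.val :=
  (h.vecMul_dotProduct_vecMul x.val y.val).trans (QForm_eq_dotProduct_mulVec m x.val y.val).symm

theorem toDlat_eq_zero_iff (h : IsRealization 1 m.get V r) (x : kerChi m) :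
    h.toDlat x = 0 ↔ ∀ y : kerChi m, QForm m x.val y.val = 0 := by
  refine ⟨fun hx y => ?_, fun hx => Subtype.ext ?_⟩
  · rw [← h.toDlat_dotProduct_toDlat, hx, AddSubgroup.coe_zero, zero_dotProduct]
  · exact dotProduct_self_eq_zero.mp ((h.toDlat_dotProduct_toDlat x x).trans (hx x))

end IsRealization

/-- for an admissible distance sequence `m` of odd length `k = 2s - 1`
(`s ≥ 1`), the quotient of `K = Ker χ ⊆ Q(m)` by its radical is isometric to the
lattice `D_{2s-2}`; equivalently, there is a surjective form-preserving homomorphism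
`K → D_{2s-2}` whose kernel is exactly the radical of `K`. -/
theorem kerChi_mod_radical_odd (m : List ℤ) (hm : AdmSeq m) (s : ℕ) (hs : 1 ≤ s)
    (hk : m.length = 2 * s - 1) :
    ∃ φ : kerChi m →+ Dlat (2 * s - 2),
      Function.Surjective φ ∧
      (∀ x y : kerChi m,
        (∑ t : Fin (2 * s - 2), (φ x).val t * (φ y).val t) = QForm m x.val y.val) ∧
      (∀ x : kerChi m, φ x = 0 ↔ ∀ y : kerChi m, QForm m x.val y.val = 0) := by
  have rank_even : Even (2 * s - 2) := ⟨s - 1, by omega⟩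
  obtain ⟨V, r, hV, hr⟩ := hm.realizable.exists_isRealization_one rank_even (by omega)
  exact ⟨hV.toDlat, hV.toDlat_surjective hr, hV.toDlat_dotProduct_toDlat, hV.toDlat_eq_zero_iff⟩
end
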